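/- Let α ∈ (0, π] and ψ_{α,2}(θ) := (1 − θ/α)₊² for θ ∈ [0,π], where (x)₊ := max(x,0). Then the 2-Schoenberg coefficients b_{n,2}(α) := (n+1/2)∫₀^π P_n(cos θ) ψ_{α,2}(θ) sin θ dθ are given, for every n ≥ 0, by b_{n,2}(α) = (2n+1) 2^{n−1} { Σ_{m even, 0≤m≤n} binom(n,m) binom((n+m−1)/2, n) [ 1/(m+1) + (2^{1−m}/((m+1)α²)) Σ_{k=0}^{m/2} binom(m+1,k)(cos((m−2k+1)α) − 1)/(m−2k+1)² ] + Σ_{m odd, 0≤m≤n} binom(n,m) binom((n+m−1)/2, n) [ 1/(m+1) − (1/((m+1)2^{m+1})) binom(m+1,(m+1)/2) + (2^{1−m}/((m+1)α²)) Σ_{k=0}^{(m−1)/2} binom(m+1,k)(cos((m−2k+1)α) − 1)/(m−2k+1)² ] }. -/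

import Mathlib

open Real

/-- The Legendre polynomials, via the standard three-term recurrence
`(n+2) P_{n+2}(x) = (2n+3) x P_{n+1}(x) - (n+1) P_n(x)`, `P_0 = 1`, `P_1 = x`. -/
noncomputable def legendreP : ℕ → ℝ → ℝ
  | 0, _ => 1
  | 1, x => x
  | n + 2, x =>
      ((2 * (n : ℝ) + 3) * x * legendreP (n + 1) x - ((n : ℝ) + 1) * legendreP n x)
        / ((n : ℝ) + 2)

/-- Generalized binomial coefficient `binom(a, n) = a(a-1)⋯(a-n+1)/n!` for real `a`. -/
noncomputable def genBinom (a : ℝ) (n : ℕ) : ℝ :=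
  (∏ i ∈ Finset.range n, (a - i)) / (n.factorial : ℝ)


/-- `∏_{i<n} (n+m-1-2i)`, i.e. `2^n n! binom((n+m-1)/2, n)`. -/
noncomputable def auxB (n m : ℕ) : ℝ := ∏ i ∈ Finset.range n, ((n : ℝ) + m - 1 - 2 * i)

lemma genBinom_eq (n m : ℕ) :
    (2 : ℝ) ^ n * genBinom (((n : ℝ) + (m : ℝ) - 1) / 2) n = auxB n m / n.factorial := by
  unfold genBinom auxB
  rw [← mul_div_assoc]
  congr 1
  have h : (2 : ℝ) ^ n = ∏ i ∈ Finset.range n, (2 : ℝ) := by simp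
  rw [h, ← Finset.prod_mul_distrib]
  apply Finset.prod_congr rfl
  intro i _
  ring

lemma auxB_two (n m : ℕ) :
    auxB (n + 2) m = ((n : ℝ) + m + 1) * auxB n m * ((m : ℝ) - n - 1) := by
  unfold auxB
  rw [Finset.prod_range_succ, Finset.prod_range_succ']
  have h : ∀ i : ℕ, (((n + 2 : ℕ) : ℝ) + m - 1 - 2 * ((i + 1 : ℕ) : ℝ)) = (n : ℝ) + m - 1 - 2 * i := by
    intro i; push_cast; ring
  simp only [h]
  push_cast
  ring

lemma auxB_one (n m : ℕ) :
    auxB (n + 1) m = auxB n (m + 1) * ((m : ℝ) - n) := by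
  unfold auxB
  rw [Finset.prod_range_succ]
  have h : ∀ i : ℕ, (((n + 1 : ℕ) : ℝ) + m - 1 - 2 * (i : ℝ)) = (n : ℝ) + ((m + 1 : ℕ) : ℝ) - 1 - 2 * i := by
    intro i; push_cast; ring
  simp only [h]
  push_cast
  ring

/-- coefficients of the Legendre polynomial. -/
noncomputable def auxC (n m : ℕ) : ℝ := (n.choose m : ℝ) * (auxB n m / n.factorial)

lemma auxC_zero_rec (n : ℕ) :
    ((n : ℝ) + 2) * auxC (n + 2) 0 = - (((n : ℝ) + 1) * auxC n 0) := by
  unfold auxC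
  rw [auxB_two]
  have := Nat.factorial_ne_zero n
  simp only [Nat.factorial_succ, Nat.choose_zero_right]
  push_cast
  field_simp
  ring

lemma auxC_succ_rec (n m : ℕ) :
    ((n : ℝ) + 2) * auxC (n + 2) (m + 1)
      = (2 * (n : ℝ) + 3) * auxC (n + 1) m - ((n : ℝ) + 1) * auxC n (m + 1) := by
  unfold auxC
  rw [auxB_two, auxB_one]
  have hf : (n.factorial : ℝ) ≠ 0 := by exact_mod_cast Nat.factorial_ne_zero n
  rcases lt_trichotomy m n with h | h | h
  · obtain ⟨d, rfl⟩ := Nat.exists_eq_add_of_lt h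
    rw [Nat.cast_choose ℝ (show m + 1 ≤ m + d + 1 + 2 by omega),
      Nat.cast_choose ℝ (show m ≤ m + d + 1 + 1 by omega),
      Nat.cast_choose ℝ (show m + 1 ≤ m + d + 1 by omega)]
    rw [show m + d + 1 + 2 - (m + 1) = d + 2 by omega, show m + d + 1 + 1 - m = d + 2 by omega,
      show m + d + 1 - (m + 1) = d by omega]
    have h1 : (d.factorial : ℝ) ≠ 0 := by exact_mod_cast Nat.factorial_ne_zero d
    have h2 : (m.factorial : ℝ) ≠ 0 := by exact_mod_cast Nat.factorial_ne_zero m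
    simp only [Nat.factorial_succ] at *
    push_cast at *
    field_simp
    ring
  · subst h
    simp
  · rcases Nat.lt_or_ge (n + 1) m with h' | h'
    · simp [Nat.choose_eq_zero_of_lt h', Nat.choose_eq_zero_of_lt (show n < m + 1 by omega),
        Nat.choose_eq_zero_of_lt (show n + 2 < m + 1 by omega)]
    · have : m = n + 1 := by omega
      subst this
      rw [Nat.choose_eq_zero_of_lt (show n < n + 1 + 1 by omega)]
      simp [Nat.factorial_succ]
      field_simp
      ring

lemma auxC_eq_zero {n m : ℕ} (h : n < m) : auxC n m = 0 := by
  simp [auxC, Nat.choose_eq_zero_of_lt h]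

lemma legendreP_aux (x : ℝ) (n : ℕ) :
    legendreP n x = ∑ m ∈ Finset.range (n + 1), auxC n m * x ^ m ∧
    legendreP (n + 1) x = ∑ m ∈ Finset.range (n + 2), auxC (n + 1) m * x ^ m := by
  induction n with
  | zero => 
    constructor
    · simp [legendreP, auxC, auxB]
    · simp [legendreP, auxC, auxB, Finset.sum_range_succ]
  | succ n ih =>
    refine ⟨ih.2, ?_⟩
    rw [legendreP, ih.1, ih.2]
    have hn : (n : ℝ) + 2 ≠ 0 := by positivity
    rw [div_eq_iff hn]
    have e : ∑ m ∈ Finset.range (n + 1), auxC n m * x ^ m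
        = ∑ m ∈ Finset.range (n + 3), auxC n m * x ^ m := by
      rw [Finset.sum_range_succ _ (n + 2), Finset.sum_range_succ _ (n + 1),
        auxC_eq_zero (show n < n + 2 by omega), auxC_eq_zero (show n < n + 1 by omega)]
      ring
    rw [e, Finset.sum_range_succ' (fun m => auxC n m * x ^ m) (n + 2),
      Finset.sum_range_succ' (fun m => auxC (n + 1 + 1) m * x ^ m) (n + 2)]
    have h0 := auxC_zero_rec n
    have h1 : ∑ m ∈ Finset.range (n + 2), auxC (n + 1 + 1) (m + 1) * x ^ (m + 1) * ((n : ℝ) + 2)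
        = ∑ m ∈ Finset.range (n + 2), ((2 * (n : ℝ) + 3) * x * (auxC (n + 1) m * x ^ m)
          - ((n : ℝ) + 1) * (auxC n (m + 1) * x ^ (m + 1))) := by
      apply Finset.sum_congr rfl
      intro m _
      have := auxC_succ_rec n m
      rw [pow_succ]
      linear_combination (x ^ m * x) * this
    rw [Finset.sum_sub_distrib, ← Finset.mul_sum, ← Finset.mul_sum, ← Finset.sum_mul] at h1
    linear_combination -h1 - h0

lemma cos_pow_sum (x : ℝ) (M : ℕ) :
    Real.cos x ^ M = (1 / 2) ^ M *
      ∑ k ∈ Finset.range (M + 1), (M.choose k : ℝ) * Real.cos (((M : ℝ) - 2 * k) * x) := by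
  have hc : (Complex.cos x) ^ M = (1 / 2) ^ M *
      ∑ k ∈ Finset.range (M + 1), (M.choose k : ℂ) * Complex.exp (((M : ℂ) - 2 * k) * x * Complex.I) := by
    rw [Complex.cos, div_eq_inv_mul, mul_pow, one_div, add_comm (Complex.exp _), add_pow]
    congr 1
    apply Finset.sum_congr rfl
    intro k hk
    have hk' : k ≤ M := by simp at hk; omega
    rw [← Complex.exp_nat_mul, ← Complex.exp_nat_mul, ← Complex.exp_add, mul_comm, Nat.cast_sub hk']
    congr 2
    ring
  have h2 := congrArg Complex.re hc
  have e1 : ((Complex.cos x) ^ M).re = Real.cos x ^ M := by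
    rw [← Complex.ofReal_cos, ← Complex.ofReal_pow, Complex.ofReal_re]
  rw [e1] at h2
  rw [h2]
  have e2 : ((1 / 2 : ℂ) ^ M) = (((1 / 2 : ℝ) ^ M : ℝ) : ℂ) := by push_cast; rfl
  rw [e2, Complex.re_ofReal_mul, Complex.re_sum]
  congr 1
  apply Finset.sum_congr rfl
  intro k _
  have e3 : ((M : ℂ) - 2 * k) * x * Complex.I = (((((M : ℝ) - 2 * k) * x : ℝ)) : ℂ) * Complex.I := by
    push_cast; rfl
  rw [e3, ← Complex.ofReal_natCast, Complex.re_ofReal_mul, Complex.exp_ofReal_mul_I_re]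

/-- `∫₀^α (1-θ/α) cos(jθ) dθ`. -/
noncomputable def auxJ (α j : ℝ) : ℝ := ∫ θ in (0 : ℝ)..α, (1 - θ / α) * Real.cos (j * θ)

lemma auxJ_neg (α j : ℝ) : auxJ α (-j) = auxJ α j := by
  simp [auxJ]

lemma auxJ_zero {α : ℝ} (hα : 0 < α) : auxJ α 0 = α / 2 := by
  unfold auxJ
  rw [intervalIntegral.integral_eq_sub_of_hasDerivAt (f := fun θ => θ - θ ^ 2 / (2 * α))]
  · field_simp; ring
  · intro x _
    refine ((hasDerivAt_id x).sub (((hasDerivAt_id x).pow 2).div_const (2 * α))).congr_deriv ?_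
    simp
    field_simp
  · apply Continuous.intervalIntegrable; fun_prop

lemma auxJ_ne {α j : ℝ} (hα : 0 < α) (hj : j ≠ 0) :
    auxJ α j = (1 - Real.cos (j * α)) / (j ^ 2 * α) := by
  unfold auxJ
  rw [intervalIntegral.integral_eq_sub_of_hasDerivAt
    (f := fun θ => (1 - θ / α) * (Real.sin (j * θ) / j) - Real.cos (j * θ) / (α * j ^ 2))]
  · simp
    field_simp
    ring
  · intro x _
    have h1 : HasDerivAt (fun θ : ℝ => j * θ) j x := by
      simpa using (hasDerivAt_id x).const_mul j
    have h2 : HasDerivAt (fun θ : ℝ => 1 - θ / α) (-(1 / α)) x := by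
      simpa using ((hasDerivAt_id x).div_const α).const_sub 1
    refine ((h2.mul (h1.sin.div_const j)).sub (h1.cos.div_const (α * j ^ 2))).congr_deriv ?_
    field_simp
    ring
  · apply Continuous.intervalIntegrable; fun_prop

lemma integral_cos_pow_lin (α : ℝ) (M : ℕ) :
    ∫ θ in (0 : ℝ)..α, (1 - θ / α) * Real.cos θ ^ M
      = (1 / 2) ^ M * ∑ k ∈ Finset.range (M + 1), (M.choose k : ℝ) * auxJ α ((M : ℝ) - 2 * k) := by
  unfold auxJ
  simp_rw [← intervalIntegral.integral_const_mul]
  rw [← intervalIntegral.integral_finsetSum, ← intervalIntegral.integral_const_mul]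
  · congr 1
    ext θ
    rw [cos_pow_sum, Finset.mul_sum, Finset.mul_sum, Finset.mul_sum]
    apply Finset.sum_congr rfl
    intro k _
    ring
  · intro i _
    apply Continuous.intervalIntegrable; fun_prop

lemma integral_parts {α : ℝ} (hα : 0 < α) (m : ℕ) :
    ∫ θ in (0 : ℝ)..α, Real.cos θ ^ m * (1 - θ / α) ^ 2 * Real.sin θ
      = 1 / ((m : ℝ) + 1) - 2 / (((m : ℝ) + 1) * α) *
        ∫ θ in (0 : ℝ)..α, (1 - θ / α) * Real.cos θ ^ (m + 1) := by
  have hm : (m : ℝ) + 1 ≠ 0 := by positivity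
  have key : ∫ θ in (0 : ℝ)..α, (Real.cos θ ^ m * (1 - θ / α) ^ 2 * Real.sin θ
      + 2 / (((m : ℝ) + 1) * α) * ((1 - θ / α) * Real.cos θ ^ (m + 1))) = 1 / ((m : ℝ) + 1) := by
    rw [intervalIntegral.integral_eq_sub_of_hasDerivAt
      (f := fun θ => - ((1 - θ / α) ^ 2 * (Real.cos θ ^ (m + 1) / ((m : ℝ) + 1))))]
    · simp [hα.ne']
    · intro x _
      have h2 : HasDerivAt (fun θ : ℝ => 1 - θ / α) (-(1 / α)) x := by
        simpa using ((hasDerivAt_id x).div_const α).const_sub 1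
      have h3 : HasDerivAt (fun θ : ℝ => Real.cos θ ^ (m + 1))
        (((m + 1 : ℕ) : ℝ) * Real.cos x ^ m * (-Real.sin x)) x := by
        exact (Real.hasDerivAt_cos x).pow (m + 1)
      refine (((h2.pow 2).mul (h3.div_const ((m : ℝ) + 1))).neg).congr_deriv ?_
      simp
      field_simp
    · apply Continuous.intervalIntegrable; fun_prop
  rw [intervalIntegral.integral_add, intervalIntegral.integral_const_mul] at key
  · linarith
  · apply Continuous.intervalIntegrable; fun_prop
  · apply Continuous.intervalIntegrable; fun_prop

lemma fold_odd (f : ℕ → ℝ) (p : ℕ) (hf : ∀ k ≤ 2 * p + 1, f (2 * p + 1 - k) = f k) :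
    ∑ k ∈ Finset.range (2 * p + 2), f k = 2 * ∑ k ∈ Finset.range (p + 1), f k := by
  rw [show 2 * p + 2 = (p + 1) + (p + 1) by ring, Finset.sum_range_add, two_mul]
  congr 1
  rw [← Finset.sum_range_reflect]
  apply Finset.sum_congr rfl
  intro k hk
  have : k < p + 1 := by simpa using hk
  rw [← hf k (by omega)]
  congr 1
  omega

lemma fold_even (f : ℕ → ℝ) (p : ℕ) (hf : ∀ k ≤ 2 * p, f (2 * p - k) = f k) :
    ∑ k ∈ Finset.range (2 * p + 1), f k = 2 * (∑ k ∈ Finset.range p, f k) + f p := by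
  rw [show 2 * p + 1 = (p + 1) + p by ring, Finset.sum_range_add, Finset.sum_range_succ]
  have : ∑ x ∈ Finset.range p, f (p + 1 + x) = ∑ k ∈ Finset.range p, f k := by
    rw [← Finset.sum_range_reflect]
    apply Finset.sum_congr rfl
    intro k hk
    have : k < p := by simpa using hk
    rw [← hf k (by omega)]
    congr 1
    omega
  rw [this]; ring

lemma symm_aux (α : ℝ) (M k : ℕ) (hk : k ≤ M) :
    (M.choose (M - k) : ℝ) * auxJ α ((M : ℝ) - 2 * ((M - k : ℕ) : ℝ))
      = (M.choose k : ℝ) * auxJ α ((M : ℝ) - 2 * k) := by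
  rw [Nat.choose_symm hk, ← auxJ_neg, Nat.cast_sub hk]
  congr 2
  ring

lemma term_aux {α : ℝ} (hα : 0 < α) (m k : ℕ) (hk : 2 * k < m + 1) :
    ((m + 1).choose k : ℝ) * auxJ α (((m + 1 : ℕ) : ℝ) - 2 * k)
      = (-1 / α) * (((m + 1).choose k : ℝ) *
          (Real.cos (((m : ℝ) - 2 * (k : ℝ) + 1) * α) - 1) / ((m : ℝ) - 2 * (k : ℝ) + 1) ^ 2) := by
  have h : ((m + 1 : ℕ) : ℝ) - 2 * k = (m : ℝ) - 2 * (k : ℝ) + 1 := by push_cast; ring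
  have hj : (m : ℝ) - 2 * (k : ℝ) + 1 ≠ 0 := by
    have : (2 * (k : ℝ)) < m + 1 := by exact_mod_cast hk
    linarith
  rw [h, auxJ_ne hα hj]
  generalize (m : ℝ) - 2 * (k : ℝ) + 1 = j at *
  field_simp
  ring

lemma zpow_aux (m : ℕ) : (2 : ℝ) ^ (1 - (m : ℤ)) = 4 * (1 / 2) ^ (m + 1) := by
  rw [zpow_sub₀ (by norm_num), zpow_natCast, pow_succ, one_div, inv_pow]
  simp
  ring

lemma integral_even {α : ℝ} (hα : 0 < α) (m : ℕ) (hm : Even m) :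
    ∫ θ in (0 : ℝ)..α, Real.cos θ ^ m * (1 - θ / α) ^ 2 * Real.sin θ
      = (1 / ((m : ℝ) + 1) +
                (2 : ℝ) ^ (1 - (m : ℤ)) / (((m : ℝ) + 1) * α ^ 2) *
                  ∑ k ∈ Finset.range (m / 2 + 1),
                    ((m + 1).choose k : ℝ) *
                      (Real.cos (((m : ℝ) - 2 * (k : ℝ) + 1) * α) - 1) /
                        ((m : ℝ) - 2 * (k : ℝ) + 1) ^ 2) := by
  have hm0 : (m : ℝ) + 1 ≠ 0 := by positivity
  obtain ⟨p, hp⟩ := hm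
  have hp2 : m / 2 = p := by omega
  rw [integral_parts hα, integral_cos_pow_lin, zpow_aux, hp2]
  have hfold := fold_odd
    (fun k => ((m + 1).choose k : ℝ) * auxJ α (((m + 1 : ℕ) : ℝ) - 2 * k)) p
    (by
      intro k hk
      have e : 2 * p + 1 = m + 1 := by omega
      rw [e] at hk ⊢
      exact symm_aux α (m + 1) k hk)
  rw [show m + 1 + 1 = 2 * p + 2 by omega, hfold]
  rw [Finset.sum_congr rfl (fun k hk => term_aux hα m k (by simp at hk; omega)), ← Finset.mul_sum]
  field_simp
  ring

lemma integral_odd {α : ℝ} (hα : 0 < α) (m : ℕ) (hm : Odd m) :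
    ∫ θ in (0 : ℝ)..α, Real.cos θ ^ m * (1 - θ / α) ^ 2 * Real.sin θ
      = (1 / ((m : ℝ) + 1)
                - (1 / (((m : ℝ) + 1) * 2 ^ (m + 1))) * ((m + 1).choose ((m + 1) / 2) : ℝ)
                + (2 : ℝ) ^ (1 - (m : ℤ)) / (((m : ℝ) + 1) * α ^ 2) *
                    ∑ k ∈ Finset.range ((m - 1) / 2 + 1),
                      ((m + 1).choose k : ℝ) *
                        (Real.cos (((m : ℝ) - 2 * (k : ℝ) + 1) * α) - 1) /
                          ((m : ℝ) - 2 * (k : ℝ) + 1) ^ 2) := by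
  have hm0 : (m : ℝ) + 1 ≠ 0 := by positivity
  obtain ⟨p, hp⟩ := hm
  have hp2 : (m - 1) / 2 + 1 = p + 1 := by omega
  have hp3 : (m + 1) / 2 = p + 1 := by omega
  rw [integral_parts hα, integral_cos_pow_lin, zpow_aux, hp2, hp3]
  have hfold := fold_even
    (fun k => ((m + 1).choose k : ℝ) * auxJ α (((m + 1 : ℕ) : ℝ) - 2 * k)) (p + 1)
    (by
      intro k hk
      have e : 2 * (p + 1) = m + 1 := by omega
      rw [e] at hk ⊢
      exact symm_aux α (m + 1) k hk)
  have hz : ((m + 1 : ℕ) : ℝ) - 2 * ((p + 1 : ℕ) : ℝ) = 0 := by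
    rw [hp]; push_cast; ring
  rw [show m + 1 + 1 = 2 * (p + 1) + 1 by omega, hfold]
  rw [Finset.sum_congr rfl (fun k hk => term_aux hα m k (by simp at hk; omega)), ← Finset.mul_sum]
  simp only [hz]
  rw [auxJ_zero hα, one_div_pow]
  field_simp
  ring

lemma integral_restrict {α : ℝ} (hα : α ∈ Set.Ioc 0 π) (n : ℕ) :
    ∫ θ in (0 : ℝ)..π, legendreP n (Real.cos θ) * (max (1 - θ / α) 0) ^ 2 * Real.sin θ
      = ∑ m ∈ Finset.range (n + 1), auxC n m *
        ∫ θ in (0 : ℝ)..α, Real.cos θ ^ m * (1 - θ / α) ^ 2 * Real.sin θ := by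
  obtain ⟨h0, hπ⟩ := hα
  simp_rw [(legendreP_aux _ n).1]
  rw [← intervalIntegral.integral_add_adjacent_intervals (b := α)]
  rotate_left
  · apply Continuous.intervalIntegrable; fun_prop
  · apply Continuous.intervalIntegrable; fun_prop
  have h2 : ∫ θ in α..π, (∑ m ∈ Finset.range (n + 1), auxC n m * Real.cos θ ^ m) *
      (max (1 - θ / α) 0) ^ 2 * Real.sin θ = ∫ θ in α..π, (0 : ℝ) := by
    apply intervalIntegral.integral_congr
    intro θ hθ
    rw [Set.uIcc_of_le hπ] at hθ
    have : 1 ≤ θ / α := by rw [le_div_iff₀ h0]; linarith [hθ.1]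
    have h : max (1 - θ / α) 0 = 0 := max_eq_right (by linarith)
    simp [h]
  rw [h2, intervalIntegral.integral_zero, add_zero]
  simp_rw [← intervalIntegral.integral_const_mul]
  rw [← intervalIntegral.integral_finsetSum]
  · apply intervalIntegral.integral_congr
    intro θ hθ
    rw [Set.uIcc_of_le h0.le] at hθ
    have : θ / α ≤ 1 := by rw [div_le_iff₀ h0]; linarith [hθ.2]
    have h : max (1 - θ / α) 0 = 1 - θ / α := max_eq_left (by linarith)
    simp only [h, Finset.sum_mul]
    apply Finset.sum_congr rfl
    intro k _
    ring
  · intro i _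
    apply Continuous.intervalIntegrable; fun_prop

/-- closed form for the 2-Schoenberg coefficients
`b_{n,2}(α) = (n + 1/2) ∫₀^π P_n(cos θ) ψ_{α,2}(θ) sin θ dθ` of the Askey
family `ψ_{α,2}(θ) = ((1 - θ/α)₊)²` for `α ∈ (0, π]`. -/
theorem askey_schoenberg_coefficients
    (α : ℝ) (hα : α ∈ Set.Ioc 0 π) (n : ℕ) :
    ((n : ℝ) + 1 / 2) *
        ∫ θ in (0 : ℝ)..π, legendreP n (Real.cos θ) * (max (1 - θ / α) 0) ^ 2 * Real.sin θ
      = (2 * (n : ℝ) + 1) * (2 : ℝ) ^ ((n : ℤ) - 1) *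
        ((∑ m ∈ (Finset.range (n + 1)).filter (fun m => Even m),
            (n.choose m : ℝ) * genBinom (((n : ℝ) + (m : ℝ) - 1) / 2) n *
              (1 / ((m : ℝ) + 1) +
                (2 : ℝ) ^ (1 - (m : ℤ)) / (((m : ℝ) + 1) * α ^ 2) *
                  ∑ k ∈ Finset.range (m / 2 + 1),
                    ((m + 1).choose k : ℝ) *
                      (Real.cos (((m : ℝ) - 2 * (k : ℝ) + 1) * α) - 1) /
                        ((m : ℝ) - 2 * (k : ℝ) + 1) ^ 2))
        + ∑ m ∈ (Finset.range (n + 1)).filter (fun m => Odd m),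
            (n.choose m : ℝ) * genBinom (((n : ℝ) + (m : ℝ) - 1) / 2) n *
              (1 / ((m : ℝ) + 1)
                - (1 / (((m : ℝ) + 1) * 2 ^ (m + 1))) * ((m + 1).choose ((m + 1) / 2) : ℝ)
                + (2 : ℝ) ^ (1 - (m : ℤ)) / (((m : ℝ) + 1) * α ^ 2) *
                    ∑ k ∈ Finset.range ((m - 1) / 2 + 1),
                      ((m + 1).choose k : ℝ) *
                        (Real.cos (((m : ℝ) - 2 * (k : ℝ) + 1) * α) - 1) /
                          ((m : ℝ) - 2 * (k : ℝ) + 1) ^ 2)) := by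
  rw [integral_restrict hα]
  have h0 : 0 < α := hα.1
  rw [← Finset.sum_filter_add_sum_filter_not _ (fun m => Even m)]
  simp only [Nat.not_even_iff_odd]
  have hpow : (2 : ℝ) ^ ((n : ℤ) - 1) = 2 ^ n / 2 := by
    rw [zpow_sub₀ (by norm_num), zpow_natCast]; simp
  rw [hpow, show (2 * (n : ℝ) + 1) * (2 ^ n / 2) = ((n : ℝ) + 1 / 2) * 2 ^ n by ring, mul_assoc]
  congr 1
  rw [mul_add, Finset.mul_sum, Finset.mul_sum]
  congr 1
  · apply Finset.sum_congr rfl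
    intro m hm
    rw [integral_even h0 m (Finset.mem_filter.mp hm).2, auxC, ← genBinom_eq]
    ring
  · apply Finset.sum_congr rfl
    intro m hm
    rw [integral_odd h0 m (Finset.mem_filter.mp hm).2, auxC, ← genBinom_eq]
    ring
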